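/- Let Ω_h be a finite grid set with boundary ∂Ω_h as above, and let 𝒟, 𝒟· be the forward-gradient and backward-divergence operators with zero extension. For every function u : Ω_h → ℝ³ there exist unique functions w : Ω_h → ℝ³ and φ : Ω_h → ℝ such that 𝒟·w = 0 and w + 𝒟φ = u on Ω_h ∖ ∂Ω_h, while w = 0 and φ = 0 on ∂Ω_h (u need not vanish on ∂Ω_h). (Discrete Helmholtz–Hodge decomposition.) -/

import Mathlib

open Finset MeasureTheory Set Filter

/-- Standard basis vector `e^i` of the integer grid `ℤ³` (grid points `x` represent `h•x ∈ hℤ³`). -/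
def gE (i : Fin 3) : Fin 3 → ℤ := fun j => if j = i then 1 else 0

/-- Forward difference quotient `D_i⁺φ(x) = (φ(x+he^i) − φ(x))/h`. -/
noncomputable def Dp (h : ℝ) (i : Fin 3) (φ : (Fin 3 → ℤ) → ℝ) (x : Fin 3 → ℤ) : ℝ :=
  (φ (x + gE i) - φ x) / h

/-- Centered second difference `D_i²φ(x) = (φ(x+he^i)+φ(x−he^i)−2φ(x))/h²`. -/
noncomputable def Dtwo (h : ℝ) (i : Fin 3) (φ : (Fin 3 → ℤ) → ℝ) (x : Fin 3 → ℤ) : ℝ :=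
  (φ (x + gE i) + φ (x - gE i) - 2 * φ x) / h ^ 2

/-- Discrete (forward) gradient `𝒟φ`. -/
noncomputable def dgrad (h : ℝ) (φ : (Fin 3 → ℤ) → ℝ) (x : Fin 3 → ℤ) : Fin 3 → ℝ :=
  fun i => Dp h i φ x

/-- Discrete (backward) divergence `𝒟·w`. -/
noncomputable def ddiv (h : ℝ) (w : (Fin 3 → ℤ) → Fin 3 → ℝ) (x : Fin 3 → ℤ) : ℝ :=
  ∑ i, (w x i - w (x - gE i) i) / h

/-- Grid boundary `∂Ω_h = {x ∈ Ω_h | {x ± he^i} ⊄ Ω_h}`. -/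
def gBdry (Ω : Finset (Fin 3 → ℤ)) : Finset (Fin 3 → ℤ) :=
  Ω.filter fun x => ¬ (∀ i, (x + gE i) ∈ Ω ∧ (x - gE i) ∈ Ω)


lemma hh_shift (I : Finset (Fin 3 → ℤ)) (φ f : (Fin 3 → ℤ) → ℝ) (e : Fin 3 → ℤ)
    (hφ : ∀ x, x ∉ I → φ x = 0) (hf : ∀ x, x ∉ I → f x = 0) :
    ∑ x ∈ I, φ x * f (x - e) = ∑ x ∈ I, φ (x + e) * f x := by
  rw [← finsum_eq_sum_of_support_subset, ← finsum_eq_sum_of_support_subset]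
  · rw [← finsum_comp_equiv (Equiv.addRight e)]
    simp
  · intro x hx
    by_contra hn
    exact hx (by simp [hf x (by simpa using hn)])
  · intro x hx
    by_contra hn
    exact hx (by simp [hφ x (by simpa using hn)])

lemma hh_key (h : ℝ) (hh : 0 < h) (I : Finset (Fin 3 → ℤ))
    (w : (Fin 3 → ℤ) → Fin 3 → ℝ) (φ : (Fin 3 → ℤ) → ℝ)
    (hw : ∀ x, x ∉ I → w x = 0) (hφ : ∀ x, x ∉ I → φ x = 0)
    (hd : ∀ x ∈ I, ddiv h w x = 0) (hg : ∀ x ∈ I, w x + dgrad h φ x = 0) :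
    w = 0 ∧ φ = 0 := by
  have hwi : ∀ x ∈ I, ∀ i, w x i = - Dp h i φ x := by
    intro x hx i
    have := congrFun (hg x hx) i
    simp only [Pi.add_apply, dgrad, Pi.zero_apply] at this
    linarith
  have h0 : ∑ x ∈ I, φ x * ddiv h w x = 0 :=
    Finset.sum_eq_zero fun x hx => by rw [hd x hx, mul_zero]
  have h1 : ∑ x ∈ I, φ x * ddiv h w x = ∑ x ∈ I, ∑ i, (w x i) ^ 2 := by
    have e1 : ∑ x ∈ I, φ x * ddiv h w x
        = ∑ i, (∑ x ∈ I, φ x * w x i - ∑ x ∈ I, φ x * w (x - gE i) i) / h := by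
      simp only [ddiv, Finset.mul_sum]
      rw [Finset.sum_comm]
      refine Finset.sum_congr rfl fun i _ => ?_
      rw [← Finset.sum_sub_distrib, Finset.sum_div]
      exact Finset.sum_congr rfl fun x _ => by ring
    rw [e1, Finset.sum_comm]
    refine Finset.sum_congr rfl fun i _ => ?_
    rw [hh_shift I φ (fun x => w x i) (gE i) hφ (fun x hx => by simp [hw x hx]),
      ← Finset.sum_sub_distrib, Finset.sum_div]
    refine Finset.sum_congr rfl fun x hx => ?_
    have := hwi x hx i
    rw [sq]
    nth_rewrite 3 [this]
    simp only [Dp]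
    ring
  have hw0 : ∀ x ∈ I, ∀ i, w x i = 0 := by
    rw [h1] at h0
    intro x hx i
    have h2 := (Finset.sum_eq_zero_iff_of_nonneg
      (fun x _ => Finset.sum_nonneg fun i _ => sq_nonneg (w x i))).1 h0 x hx
    have h3 := (Finset.sum_eq_zero_iff_of_nonneg
      (fun i _ => sq_nonneg (w x i))).1 h2 i (Finset.mem_univ i)
    exact pow_eq_zero_iff (two_ne_zero) |>.1 h3
  refine ⟨?_, ?_⟩
  · funext x i
    by_cases hx : x ∈ I
    · exact hw0 x hx i
    · simp [hw x hx]
  · by_contra hne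
    obtain ⟨y, hy⟩ := Function.ne_iff.1 hne
    have hyI : y ∈ I := by
      by_contra hn
      exact hy (hφ y hn)
    obtain ⟨x, hx, hmax⟩ := Finset.exists_max_image (I.filter fun x => φ x ≠ 0)
      (fun x => x 0) ⟨y, Finset.mem_filter.2 ⟨hyI, hy⟩⟩
    obtain ⟨hxI, hx0⟩ := Finset.mem_filter.1 hx
    have h4 := hwi x hxI 0
    rw [hw0 x hxI 0, Dp, zero_eq_neg, div_eq_zero_iff] at h4
    have h5 : φ (x + gE 0) = φ x := by
      rcases h4 with h4 | h4
      · linarith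
      · exact absurd h4 hh.ne'
    have h6 : φ (x + gE 0) ≠ 0 := by rw [h5]; exact hx0
    have h7 : x + gE 0 ∈ I := by
      by_contra hn
      exact h6 (hφ _ hn)
    have := hmax _ (Finset.mem_filter.2 ⟨h7, h6⟩)
    simp [gE] at this

/-- Extension by zero. -/
noncomputable def hhExt {V : Type} [AddCommGroup V] [Module ℝ V] (I : Finset (Fin 3 → ℤ)) :
    (I → V) →ₗ[ℝ] ((Fin 3 → ℤ) → V) where
  toFun f x := if hx : x ∈ I then f ⟨x, hx⟩ else 0
  map_add' f g := by
    funext x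
    by_cases hx : x ∈ I <;> simp [hx]
  map_smul' c f := by
    funext x
    by_cases hx : x ∈ I <;> simp [hx]

lemma hhExt_mem {V : Type} [AddCommGroup V] [Module ℝ V] (I : Finset (Fin 3 → ℤ))
    (f : I → V) (x : I) : hhExt I f x = f x := by
  simp [hhExt]

lemma hhExt_not {V : Type} [AddCommGroup V] [Module ℝ V] (I : Finset (Fin 3 → ℤ))
    (f : I → V) (x : Fin 3 → ℤ) (hx : x ∉ I) : hhExt I f x = 0 := by
  simp [hhExt, hx]

lemma dgrad_add (h : ℝ) (φ ψ : (Fin 3 → ℤ) → ℝ) (x : Fin 3 → ℤ) :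
    dgrad h (φ + ψ) x = dgrad h φ x + dgrad h ψ x := by
  funext i
  simp only [dgrad, Dp, Pi.add_apply]
  ring

lemma dgrad_smul (h c : ℝ) (φ : (Fin 3 → ℤ) → ℝ) (x : Fin 3 → ℤ) :
    dgrad h (c • φ) x = c • dgrad h φ x := by
  funext i
  simp only [dgrad, Dp, Pi.smul_apply, smul_eq_mul]
  ring

lemma ddiv_add (h : ℝ) (w v : (Fin 3 → ℤ) → Fin 3 → ℝ) (x : Fin 3 → ℤ) :
    ddiv h (w + v) x = ddiv h w x + ddiv h v x := by
  simp only [ddiv, Pi.add_apply, ← Finset.sum_add_distrib]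
  exact Finset.sum_congr rfl fun i _ => by ring

lemma ddiv_smul (h c : ℝ) (w : (Fin 3 → ℤ) → Fin 3 → ℝ) (x : Fin 3 → ℤ) :
    ddiv h (c • w) x = c • ddiv h w x := by
  simp only [ddiv, Pi.smul_apply, smul_eq_mul, Finset.mul_sum]
  exact Finset.sum_congr rfl fun i _ => by ring

/-- The linear system of the decomposition. -/
noncomputable def hhT (h : ℝ) (I : Finset (Fin 3 → ℤ)) :
    ((I → Fin 3 → ℝ) × (I → ℝ)) →ₗ[ℝ] ((I → Fin 3 → ℝ) × (I → ℝ)) where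
  toFun p := (fun x => hhExt I p.1 x + dgrad h (hhExt I p.2) x, fun x => ddiv h (hhExt I p.1) x)
  map_add' p q := by
    ext x <;> simp only [Prod.fst_add, Prod.snd_add, map_add, dgrad_add, ddiv_add, Pi.add_apply]
    ring
  map_smul' c p := by
    ext x <;> simp only [Prod.smul_fst, Prod.smul_snd, map_smul, dgrad_smul, ddiv_smul,
      Pi.smul_apply, Pi.add_apply, RingHom.id_apply, smul_eq_mul]
    ring

lemma hhT_surj (h : ℝ) (hh : 0 < h) (I : Finset (Fin 3 → ℤ)) :
    Function.Surjective (hhT h I) := by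
  rw [← LinearMap.injective_iff_surjective, injective_iff_map_eq_zero]
  rintro ⟨w, φ⟩ hp
  have hp1 := congrArg Prod.fst hp
  have hp2 := congrArg Prod.snd hp
  obtain ⟨a, b⟩ := hh_key h hh I (hhExt I w) (hhExt I φ) (hhExt_not I w) (hhExt_not I φ)
    (fun x hx => congrFun hp2 ⟨x, hx⟩) (fun x hx => congrFun hp1 ⟨x, hx⟩)
  refine Prod.ext ?_ ?_
  · funext x
    have := congrFun a x
    rwa [hhExt_mem] at this
  · funext x
    have := congrFun b x
    rwa [hhExt_mem] at this

/-- Theorem 2.2: discrete Helmholtz–Hodge decomposition,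
existence and uniqueness. -/
theorem discrete_helmholtz_hodge
    (h : ℝ) (hh : 0 < h) (Ω : Finset (Fin 3 → ℤ))
    (u : (Fin 3 → ℤ) → Fin 3 → ℝ) :
    ∃! p : ((Fin 3 → ℤ) → Fin 3 → ℝ) × ((Fin 3 → ℤ) → ℝ),
      (∀ x, x ∉ Ω → p.1 x = 0 ∧ p.2 x = 0) ∧
      (∀ x ∈ gBdry Ω, p.1 x = 0 ∧ p.2 x = 0) ∧
      (∀ x ∈ Ω \ gBdry Ω, ddiv h p.1 x = 0 ∧ p.1 x + dgrad h p.2 x = u x) := by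
  set I := Ω \ gBdry Ω with hI
  obtain ⟨⟨w, φ⟩, hp⟩ := hhT_surj h hh I (fun x => u x, 0)
  have hp1 := congrArg Prod.fst hp
  have hp2 := congrArg Prod.snd hp
  have hΩ : ∀ x, x ∉ Ω → x ∉ I := fun x hx hn => hx (Finset.mem_sdiff.1 hn).1
  have hB : ∀ x ∈ gBdry Ω, x ∉ I := fun x hx hn => (Finset.mem_sdiff.1 hn).2 hx
  refine ⟨(hhExt I w, hhExt I φ), ⟨?_, ?_, ?_⟩, ?_⟩
  · exact fun x hx => ⟨hhExt_not I w x (hΩ x hx), hhExt_not I φ x (hΩ x hx)⟩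
  · exact fun x hx => ⟨hhExt_not I w x (hB x hx), hhExt_not I φ x (hB x hx)⟩
  · exact fun x hx => ⟨congrFun hp2 ⟨x, hx⟩, congrFun hp1 ⟨x, hx⟩⟩
  · rintro ⟨v, ψ⟩ ⟨q1, q2, q3⟩
    have q : ∀ x, x ∉ I → v x = 0 ∧ ψ x = 0 := by
      intro x hx
      by_cases hxΩ : x ∈ Ω
      · refine q2 x ?_
        by_contra hn
        exact hx (Finset.mem_sdiff.2 ⟨hxΩ, hn⟩)
      · exact q1 x hxΩ
    obtain ⟨a, b⟩ := hh_key h hh I (v + (-1 : ℝ) • hhExt I w) (ψ + (-1 : ℝ) • hhExt I φ)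
      (fun x hx => by simp [(q x hx).1, hhExt_not I w x hx])
      (fun x hx => by simp [(q x hx).2, hhExt_not I φ x hx])
      (fun x hx => by
        have e : ddiv h (hhExt I w) x = 0 := congrFun hp2 ⟨x, hx⟩
        have e' : ddiv h v x = 0 := (q3 x hx).1
        rw [ddiv_add, ddiv_smul, e, e']
        simp)
      (fun x hx => by
        have e : hhExt I w x + dgrad h (hhExt I φ) x = u x := congrFun hp1 ⟨x, hx⟩
        have e' : v x + dgrad h ψ x = u x := (q3 x hx).2
        rw [dgrad_add, dgrad_smul]
        have e2 := e'.trans e.symm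
        rw [← sub_eq_zero] at e2
        rw [← e2, Pi.add_apply, Pi.smul_apply]
        module)
    refine Prod.ext ?_ ?_
    · rw [neg_one_smul, ← sub_eq_add_neg, sub_eq_zero] at a
      exact a
    · rw [neg_one_smul, ← sub_eq_add_neg, sub_eq_zero] at b
      exact b
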